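/- Let X, Y be Polish metric spaces and let μ ∈ FP(X, Y), i.e. μ ∈ 𝒫_p(X × Y) is concentrated on the graph of a Borel function X → Y. For every ε > 0 there exists δ > 0 such that: for every ν ∈ 𝒫_p(X × Y) with W_p(μ, ν) < δ and every coupling γ of μ and ν (a probability measure on (X × Y)² with marginals μ and ν) satisfying ∫ ρ(x_1, x_2)^p dγ((x_1,y_1),(x_2,y_2)) < δ^p, one has ∫ ρ(y_1, y_2)^p dγ((x_1,y_1),(x_2,y_2)) < ε^p. -/

import Mathlib

open MeasureTheory ProbabilityTheory ENNReal Filter Topology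

noncomputable section

namespace AWPaper

/-! ### Generic constructions -/

variable {α β : Type*}

/-- The set of couplings of two measures. -/
def Cpl [MeasurableSpace α] [MeasurableSpace β] (μ : Measure α) (ν : Measure β) :
    Set (Measure (α × β)) :=
  {π | π.map Prod.fst = μ ∧ π.map Prod.snd = ν}

/-- The `p`-Wasserstein distance (with values in `ℝ≥0∞`) associated to an
`ℝ≥0∞`-valued distance function `d`. -/
def Wp [MeasurableSpace α] (p : ℝ) (d : α → α → ℝ≥0∞) (μ ν : Measure α) : ℝ≥0∞ :=
  ⨅ π ∈ Cpl μ ν, (∫⁻ z, d z.1 z.2 ^ p ∂π) ^ (1 / p)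

/-- The topology generated by the open balls of an `ℝ≥0∞`-valued distance
function.  For a genuine metric this is the metric topology. -/
def ballTop (d : α → α → ℝ≥0∞) : TopologicalSpace α :=
  TopologicalSpace.generateFrom {s | ∃ x ε, 0 < ε ∧ s = {y | d x y < ε}}

/-- The product distance of two `ℝ≥0∞`-valued distances, `ℓ^p`-style. -/
def prodDist (p : ℝ) (d₁ : α → α → ℝ≥0∞) (d₂ : β → β → ℝ≥0∞) :
    α × β → α × β → ℝ≥0∞ :=
  fun u v => (d₁ u.1 v.1 ^ p + d₂ u.2 v.2 ^ p) ^ (1 / p)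

/-- Membership in the `p`-Wasserstein space: a probability measure with finite
`p`-th moment (w.r.t. the distance function `d`). -/
def MemPp [MeasurableSpace α] (p : ℝ) (d : α → α → ℝ≥0∞) (μ : Measure α) : Prop :=
  IsProbabilityMeasure μ ∧ ∃ x₀, ∫⁻ x, d x₀ x ^ p ∂μ ≠ ∞

/-- The weak topology on measures induced by integration of bounded continuous
functions, for a given topology `τ` on the base space. -/
def weakTop [MeasurableSpace α] (τ : TopologicalSpace α) : TopologicalSpace (Measure α) :=
  TopologicalSpace.induced
    (fun μ => fun f : @BoundedContinuousFunction α ℝ τ _ => ∫ x, f x ∂μ)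
    Pi.topologicalSpace

/-- The product topology built from two explicitly given topologies. -/
def prodTop (τ₁ : TopologicalSpace α) (τ₂ : TopologicalSpace β) : TopologicalSpace (α × β) :=
  TopologicalSpace.induced Prod.fst τ₁ ⊓ TopologicalSpace.induced Prod.snd τ₂

/-- An everywhere-defined version of the disintegration kernel: it agrees with
`Measure.condKernel` on finite measures. -/
def condK [MeasurableSpace α] [MeasurableSpace β] [StandardBorelSpace β] [Nonempty β]
    (ρ : Measure (α × β)) : Kernel α β :=
  letI := Classical.dec (IsFiniteMeasure ρ)
  if h : IsFiniteMeasure ρ then @Measure.condKernel α β _ _ _ _ ρ h else 0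

/-- The disintegration map `𝒫(A × B) → 𝒫(A × 𝒫(B))`. -/
def disint [MeasurableSpace α] [MeasurableSpace β] [StandardBorelSpace β] [Nonempty β]
    (μ : Measure (α × β)) : Measure (α × Measure β) :=
  μ.map (fun z => (z.1, condK μ z.1))

/-- The intensity ("und") map `𝒫(A × 𝒫(B)) → 𝒫(A × B)`. -/
def und [MeasurableSpace α] [MeasurableSpace β] (μ : Measure (α × Measure β)) :
    Measure (α × β) :=
  μ.bind (fun z => (Measure.dirac z.1).prod z.2)

/-! ### Path spaces -/

variable {X : Type*} [MeasurableSpace X]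

/-- The path-space distance `ρ̄((x_t),(y_t)) = (∑ ρ(x_t,y_t)^p)^{1/p}`. -/
def pathDist (p : ℝ) (d : X → X → ℝ≥0∞) {N : ℕ} :
    (Fin N → X) → (Fin N → X) → ℝ≥0∞ :=
  fun x y => (∑ t, d (x t) (y t) ^ p) ^ (1 / p)

/-- The first `t` coordinates of a path. -/
def restr {N : ℕ} (t : ℕ) (h : t ≤ N) (x : Fin N → X) : Fin t → X :=
  fun s => x (Fin.castLE h s)

/-- The last `N - t` coordinates of a path. -/
def tailr {N : ℕ} (t : ℕ) (h : t ≤ N) (x : Fin N → X) : Fin (N - t) → X :=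
  fun s => x ⟨t + s.1, by have := s.2; omega⟩

/-- A coupling `π` of two path measures is causal: for every `t` and Borel
`A ⊆ 𝒳^t`, `π((Y_1,…,Y_t) ∈ A | X) = π((Y_1,…,Y_t) ∈ A | X_1,…,X_t)` a.s. -/
def Causal {N : ℕ} (π : Measure ((Fin N → X) × (Fin N → X))) : Prop :=
  ∀ (t : ℕ) (h : t ≤ N) (A : Set (Fin t → X)), MeasurableSet A →
    (π[fun z => A.indicator (fun _ => (1 : ℝ)) (restr t h z.2) |
        MeasurableSpace.comap Prod.fst inferInstance])
      =ᵐ[π]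
    (π[fun z => A.indicator (fun _ => (1 : ℝ)) (restr t h z.2) |
        MeasurableSpace.comap (fun z => restr t h z.1) inferInstance])

/-- Bicausal couplings. -/
def Bicausal {N : ℕ} (π : Measure ((Fin N → X) × (Fin N → X))) : Prop :=
  Causal π ∧ Causal (π.map Prod.swap)

/-- The causal Wasserstein "distance" `CW_p`. -/
def CW (p : ℝ) (d : X → X → ℝ≥0∞) {N : ℕ} (μ ν : Measure (Fin N → X)) : ℝ≥0∞ :=
  ⨅ π ∈ {π ∈ Cpl μ ν | Causal π}, (∫⁻ z, pathDist p d z.1 z.2 ^ p ∂π) ^ (1 / p)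

/-- The symmetrized causal Wasserstein distance `SCW_p`. -/
def SCW (p : ℝ) (d : X → X → ℝ≥0∞) {N : ℕ} (μ ν : Measure (Fin N → X)) : ℝ≥0∞ :=
  max (CW p d μ ν) (CW p d ν μ)

/-- The adapted (nested, bicausal) Wasserstein distance `AW_p`. -/
def AW (p : ℝ) (d : X → X → ℝ≥0∞) {N : ℕ} (μ ν : Measure (Fin N → X)) : ℝ≥0∞ :=
  ⨅ π ∈ {π ∈ Cpl μ ν | Bicausal π}, (∫⁻ z, pathDist p d z.1 z.2 ^ p ∂π) ^ (1 / p)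

/-! ### Nested spaces (Pflug's nested distributions / Vershik's iterated spaces) -/

/-- A measurable space together with an `ℝ≥0∞`-valued distance. -/
structure QMS : Type 1 where
  carrier : Type
  inst : MeasurableSpace carrier
  dist : carrier → carrier → ℝ≥0∞

/-- The nested sequence of spaces: `nest X _ d p 0 = 𝒳` (this is `𝒳_N`), and
`nest X _ d p (k+1) = 𝒳 × 𝒫(nest X _ d p k)` with the nested distance
`D = (ρ^p + 𝒲_p^p)^{1/p}`.  Thus `𝒳_1` (for `N = k+1` time points) is
`nest X _ d p k`. -/
def nest (X : Type) (mX : MeasurableSpace X) (d : X → X → ℝ≥0∞) (p : ℝ) : ℕ → QMS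
  | 0 => ⟨X, mX, d⟩
  | (k + 1) =>
    let Q := nest X mX d p k
    ⟨X × @Measure Q.carrier Q.inst,
      @Prod.instMeasurableSpace _ _ mX (@Measure.instMeasurableSpace _ Q.inst),
      fun a b => (d a.1 b.1 ^ p + (@Wp _ Q.inst p Q.dist a.2 b.2) ^ p) ^ (1 / p)⟩

section NMapSec

variable (Y : Type) [mY : MeasurableSpace Y] [TopologicalSpace Y] [PolishSpace Y]
  [BorelSpace Y] [Nonempty Y]

/-- The map `𝒩` sending the law of a process with `k+1` time steps to the
corresponding nested distribution, via iterated regular conditional laws. -/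
def NMap (d : Y → Y → ℝ≥0∞) (p : ℝ) :
    ∀ k : ℕ, Measure (Fin (k + 1) → Y) →
      @Measure (nest Y mY d p k).carrier (nest Y mY d p k).inst
  | 0, μ =>
    letI : MeasurableSpace (nest Y mY d p 0).carrier := (nest Y mY d p 0).inst
    μ.map (fun x => x 0)
  | (k + 1), μ =>
    letI : MeasurableSpace (nest Y mY d p k).carrier := (nest Y mY d p k).inst
    letI : MeasurableSpace (nest Y mY d p (k + 1)).carrier := (nest Y mY d p (k + 1)).inst
    (μ.map (fun x => x 0)).map
      (fun x₀ => (x₀, NMap d p k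
        ((condK (μ.map (fun x => (x 0, fun s : Fin (k + 1) => x s.succ)))) x₀)))

end NMapSec

section PathStructures

variable {Y : Type*} [mY : MeasurableSpace Y]

/-- A process `L` is adapted: `L t` depends only on the first `t+1` coordinates. -/
def AdaptedProc {N : ℕ} (L : Fin N → (Fin N → Y) → ℝ) : Prop :=
  ∀ (t : Fin N) (x y : Fin N → Y), (∀ s : Fin N, s ≤ t → x s = y s) → L t x = L t y

/-- `τ` is a stopping time of the canonical filtration on the path space. -/
def IsStopTime {N : ℕ} (τ : (Fin N → Y) → Fin N) : Prop :=
  ∀ t : Fin N,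
    MeasurableSet[MeasurableSpace.comap (restr (X := Y) (t.1 + 1) t.2) inferInstance]
      {x | τ x = t}

/-- The optimal stopping value `v^L(μ)`. -/
def stopVal {N : ℕ} (L : Fin N → (Fin N → Y) → ℝ) (μ : Measure (Fin N → Y)) : ℝ :=
  ⨅ τ : {τ : (Fin N → Y) → Fin N // IsStopTime τ}, ∫ x, L (τ.1 x) x ∂μ

variable [TopologicalSpace Y]

/-- `AC(X̄)`: adapted processes which are continuous and bounded. -/
def ACbdd {N : ℕ} (L : Fin N → (Fin N → Y) → ℝ) : Prop :=
  (∀ t, Continuous (L t)) ∧ AdaptedProc L ∧ ∃ C : ℝ, ∀ t x, |L t x| ≤ C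

/-- `AC_p(X̄)`: adapted continuous processes of growth of order `p`. -/
def ACp (p : ℝ) (d : Y → Y → ℝ≥0∞) {N : ℕ} (L : Fin N → (Fin N → Y) → ℝ) : Prop :=
  (∀ t, Continuous (L t)) ∧ AdaptedProc L ∧
    ∃ (C : ℝ) (x₀ : Fin N → Y), ∀ t x, |L t x| ≤ C * (1 + ((pathDist p d x₀ x) ^ p).toReal)

/-- The optimal stopping topology (weak version, bounded continuous rewards). -/
def stopTopW (N : ℕ) : TopologicalSpace (Measure (Fin N → Y)) :=
  ⨅ L : {L : Fin N → (Fin N → Y) → ℝ // ACbdd L},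
    TopologicalSpace.induced (stopVal L.1) inferInstance

/-- The `𝒲_p`-optimal stopping topology. -/
def stopTopWp (p : ℝ) (d : Y → Y → ℝ≥0∞) (N : ℕ) :
    TopologicalSpace (Measure (Fin N → Y)) :=
  ⨅ L : {L : Fin N → (Fin N → Y) → ℝ // ACp p d L},
    TopologicalSpace.induced (stopVal L.1) inferInstance

variable [PolishSpace Y] [BorelSpace Y] [Nonempty Y]

/-- Hellwig's map `I_t`, sending `μ` to the joint law of the first `t`
coordinates together with the conditional law of the remaining coordinates. -/
def infoMap (N t : ℕ) (h : t ≤ N) (μ : Measure (Fin N → Y)) :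
    Measure ((Fin t → Y) × Measure (Fin (N - t) → Y)) :=
  μ.map (fun x => (restr t h x,
    condK (μ.map (fun y => (restr t h y, tailr t h y))) (restr t h x)))

/-- Hellwig's information topology (weak version). -/
def infoTopW (N : ℕ) : TopologicalSpace (Measure (Fin N → Y)) :=
  ⨅ (t : ℕ) (_ : 1 ≤ t) (h : t ≤ N - 1),
    TopologicalSpace.induced (infoMap N t (le_trans h (Nat.sub_le N 1)))
      (weakTop (prodTop Pi.topologicalSpace (weakTop Pi.topologicalSpace)))

/-- The `𝒲_p`-information topology. -/
def infoTopWp (p : ℝ) (d : Y → Y → ℝ≥0∞) (N : ℕ) :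
    TopologicalSpace (Measure (Fin N → Y)) :=
  ⨅ (t : ℕ) (_ : 1 ≤ t) (h : t ≤ N - 1),
    TopologicalSpace.induced (infoMap N t (le_trans h (Nat.sub_le N 1)))
      (ballTop (Wp p (prodDist p (pathDist p d) (Wp p (pathDist p d)))))

/-- Aldous' prediction process `Z_t^μ` (as a function of the path). -/
def predict (N : ℕ) (μ : Measure (Fin N → Y)) (t : ℕ) (h : t ≤ N) :
    (Fin N → Y) → Measure (Fin N → Y) :=
  fun x => condK (μ.map (fun y => (restr t h y, y))) (restr t h x)

/-- Aldous' map `E`, sending `μ` to the joint law of the path together with its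
prediction process. -/
def aldousMap (N : ℕ) (μ : Measure (Fin N → Y)) :
    Measure ((Fin N → Y) × (Fin (N + 1) → Measure (Fin N → Y))) :=
  μ.map (fun x =>
    (x, fun t : Fin (N + 1) => predict N μ t.1 (Nat.lt_succ_iff.mp t.2) x))

/-- Aldous' extended weak topology. -/
def aldousTopW (N : ℕ) : TopologicalSpace (Measure (Fin N → Y)) :=
  TopologicalSpace.induced (aldousMap N)
    (weakTop (prodTop Pi.topologicalSpace
      (@Pi.topologicalSpace (Fin (N + 1)) (fun _ => Measure (Fin N → Y))
        (fun _ => weakTop Pi.topologicalSpace))))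

/-- The extended `𝒲_p`-topology. -/
def aldousTopWp (p : ℝ) (d : Y → Y → ℝ≥0∞) (N : ℕ) :
    TopologicalSpace (Measure (Fin N → Y)) :=
  TopologicalSpace.induced (aldousMap N)
    (ballTop (Wp p (prodDist p (pathDist p d)
      (fun Z Z' : Fin (N + 1) → Measure (Fin N → Y) =>
        (∑ t, Wp p (pathDist p d) (Z t) (Z' t) ^ p) ^ (1 / p)))))

end PathStructures

/-! ### The lifted two-time-point space `𝒳₁ × 𝒫_p(𝒳₂)` -/

section Lifted

variable {A B : Type*} [MeasurableSpace A] [MeasurableSpace B]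

/-- The nested distance on `𝒳₁ × 𝒫_p(𝒳₂)`. -/
def liftDist (p : ℝ) (dA : A → A → ℝ≥0∞) (dB : B → B → ℝ≥0∞) :
    (A × Measure B) → (A × Measure B) → ℝ≥0∞ :=
  fun u v => (dA u.1 v.1 ^ p + Wp p dB u.2 v.2 ^ p) ^ (1 / p)

/-- `η` is a version of the measure-valued conditional expectation
`E_γ[X̂₂ | Y⃗]` (i.e. the barycenter of a regular conditional law of `X̂₂`
given `Y⃗ = (Y₁, Ŷ₂)`). -/
def IsCondBar (γ : Measure ((A × Measure B) × (A × Measure B)))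
    (η : (A × Measure B) × (A × Measure B) → Measure B) : Prop :=
  (∃ g : (A × Measure B) → Measure B, Measurable g ∧ ∀ z, η z = g z.2) ∧
  (∀ z, IsProbabilityMeasure (η z)) ∧
  ∀ S : Set (A × Measure B), MeasurableSet S → ∀ E : Set B, MeasurableSet E →
    ∫⁻ z in {z | z.2 ∈ S}, η z E ∂γ = ∫⁻ z in {z | z.2 ∈ S}, z.1.2 E ∂γ

/-- `AW̄_p`, the `p`-Wasserstein distance on `𝒫_p(𝒳₁ × 𝒫_p(𝒳₂))`. -/
def AWbar (p : ℝ) (dA : A → A → ℝ≥0∞) (dB : B → B → ℝ≥0∞)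
    (μ ν : Measure (A × Measure B)) : ℝ≥0∞ :=
  Wp p (liftDist p dA dB) μ ν

/-- `CW̄_p`, the lifted causal Wasserstein "distance". -/
def CWbar (p : ℝ) (dA : A → A → ℝ≥0∞) (dB : B → B → ℝ≥0∞)
    (μ ν : Measure (A × Measure B)) : ℝ≥0∞ :=
  ⨅ γ ∈ Cpl μ ν, ⨅ η ∈ {η | IsCondBar γ η},
    (∫⁻ z, (dA z.1.1 z.2.1 ^ p + Wp p dB (η z) z.2.2 ^ p) ∂γ) ^ (1 / p)

/-- `SCW̄_p`, the symmetrization of `CW̄_p`. -/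
def SCWbar (p : ℝ) (dA : A → A → ℝ≥0∞) (dB : B → B → ℝ≥0∞)
    (μ ν : Measure (A × Measure B)) : ℝ≥0∞ :=
  max (CWbar p dA dB μ ν) (CWbar p dA dB ν μ)

/-- Membership in `𝒫_p(𝒳₁ × 𝒫_p(𝒳₂))`: a probability measure, concentrated on
`𝒳₁ × 𝒫_p(𝒳₂)`, with finite `p`-th moment for the nested distance. -/
def MemPpLift (p : ℝ) (dA : A → A → ℝ≥0∞) (dB : B → B → ℝ≥0∞)
    (μ : Measure (A × Measure B)) : Prop :=
  IsProbabilityMeasure μ ∧ (∀ᵐ z ∂μ, MemPp p dB z.2) ∧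
    ∃ z₀ : A × Measure B, MemPp p dB z₀.2 ∧ ∫⁻ z, liftDist p dA dB z₀ z ^ p ∂μ ≠ ∞

/-- Two-time-point causality: given a coupling `π` of measures on products
`A₁ × B₁` and `A₂ × B₂`, the conditional law of `Y₁` given `X = (X₁, X₂)`
coincides with the conditional law of `Y₁` given `X₁`. -/
def Causal2 {A₁ B₁ A₂ B₂ : Type*} [MeasurableSpace A₁] [MeasurableSpace B₁]
    [MeasurableSpace A₂] [MeasurableSpace B₂]
    (π : Measure ((A₁ × B₁) × (A₂ × B₂))) : Prop :=
  ∀ S : Set A₂, MeasurableSet S →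
    (π[fun z => S.indicator (fun _ => (1 : ℝ)) z.2.1 |
        MeasurableSpace.comap Prod.fst inferInstance])
      =ᵐ[π]
    (π[fun z => S.indicator (fun _ => (1 : ℝ)) z.2.1 |
        MeasurableSpace.comap (fun z => z.1.1) inferInstance])

/-- The two-time-point causal Wasserstein "distance" on `𝒫_p(𝒳₁ × 𝒳₂)`. -/
def CW2 (p : ℝ) (dA : A → A → ℝ≥0∞) (dB : B → B → ℝ≥0∞)
    (μ ν : Measure (A × B)) : ℝ≥0∞ :=
  ⨅ π ∈ {π ∈ Cpl μ ν | Causal2 π},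
    (∫⁻ z, (dA z.1.1 z.2.1 ^ p + dB z.1.2 z.2.2 ^ p) ∂π) ^ (1 / p)

end Lifted

/-! Embed `Y` isometrically into a Banach space by `e`. Lipschitz maps being dense in `L^p`, the map
`e ∘ f` is close to a `K`-Lipschitz map `g` in `L^p` of the first marginal of `μ`: the quantity
`D(μ) = ‖dist (e y) (g x)‖_{L^p(μ)}` is small. Following the path `e y₁, g x₁, g x₂, e y₂`, the
`Y`-cost of a coupling `γ` of `μ` and `ν` is at most `D(μ) + K * (X-cost of γ) + D(ν)`. Following
`e y₂, e y₁, g x₁, g x₂` along an almost optimal coupling, `D(ν) ≤ D(μ) + (1 + K) * W_p(μ, ν)`. -/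

section LpDistance

variable {Ω Ω' E F : Type*} [MeasurableSpace Ω] [MeasurableSpace Ω']
  [PseudoEMetricSpace E] [PseudoEMetricSpace F] {θ : Measure Ω} {u v w u' v' : Ω → E}

/-- The `L^p` distance between two maps into an extended metric space. Unlike `eLpNorm (u - v) p θ`
it needs no group structure on the target, and it is `∞` when `u` and `v` are too far apart. -/
def eLpEDist (u v : Ω → E) (p : ℝ≥0∞) (θ : Measure Ω) : ℝ≥0∞ :=
  eLpNorm (fun ω => edist (u ω) (v ω)) p θ

lemma eLpEDist_comm (u v : Ω → E) (p : ℝ≥0∞) (θ : Measure Ω) :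
    eLpEDist u v p θ = eLpEDist v u p θ := by
  simp only [eLpEDist, edist_comm]

lemma eLpEDist_eq_eLpNorm_sub {G : Type*} [SeminormedAddCommGroup G] (u v : Ω → G) (p : ℝ≥0∞)
    (θ : Measure Ω) : eLpEDist u v p θ = eLpNorm (u - v) p θ :=
  eLpNorm_congr_enorm_ae <| .of_forall fun ω => by simp [edist_eq_enorm_sub]

lemma eLpEDist_ofReal {p : ℝ} (hp : 0 < p) (u v : Ω → E) (θ : Measure Ω) :
    eLpEDist u v (ENNReal.ofReal p) θ = (∫⁻ ω, edist (u ω) (v ω) ^ p ∂θ) ^ (1 / p) := by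
  simp [eLpEDist, eLpNorm_eq_lintegral_rpow_enorm_toReal, hp, hp.le]

lemma eLpEDist_ofReal_lt_iff {p : ℝ} (hp : 0 < p) {c : ℝ≥0∞} :
    eLpEDist u v (ENNReal.ofReal p) θ < c ↔ ∫⁻ ω, edist (u ω) (v ω) ^ p ∂θ < c ^ p := by
  rw [eLpEDist_ofReal hp, one_div, ENNReal.rpow_inv_lt_iff hp]

lemma eLpEDist_congr_left {p : ℝ≥0∞} (h : u =ᵐ[θ] u') : eLpEDist u v p θ = eLpEDist u' v p θ :=
  eLpNorm_congr_ae (h.mono fun ω hω => by simp only [hω])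

lemma aestronglyMeasurable_edist (hu : AEStronglyMeasurable u θ)
    (hv : AEStronglyMeasurable v θ) :
    AEStronglyMeasurable (fun ω => edist (u ω) (v ω)) θ :=
  continuous_edist.comp_aestronglyMeasurable (hu.prodMk hv)

lemma eLpEDist_triangle {p : ℝ≥0∞} (hp : 1 ≤ p) (hu : AEStronglyMeasurable u θ)
    (hv : AEStronglyMeasurable v θ) (hw : AEStronglyMeasurable w θ) :
    eLpEDist u w p θ ≤ eLpEDist u v p θ + eLpEDist v w p θ :=
  (eLpNorm_mono_enorm fun ω => edist_triangle (u ω) (v ω) (w ω)).trans <|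
    eLpNorm_add_le (aestronglyMeasurable_edist hu hv) (aestronglyMeasurable_edist hv hw) hp

lemma eLpEDist_triangle4 {p : ℝ≥0∞} (hp : 1 ≤ p) (hu : AEStronglyMeasurable u θ)
    (hv : AEStronglyMeasurable v θ) (hv' : AEStronglyMeasurable v' θ)
    (hw : AEStronglyMeasurable w θ) :
    eLpEDist u w p θ ≤ eLpEDist u v p θ + eLpEDist v v' p θ + eLpEDist v' w p θ :=
  (eLpEDist_triangle hp hu hv' hw).trans <| by gcongr; exact eLpEDist_triangle hp hu hv hv'

lemma eLpEDist_lipschitzWith_comp_le {K : NNReal} {g : E → F} (hg : LipschitzWith K g)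
    (u v : Ω → E) (p : ℝ≥0∞) (θ : Measure Ω) :
    eLpEDist (g ∘ u) (g ∘ v) p θ ≤ K * eLpEDist u v p θ :=
  eLpNorm_le_mul_eLpNorm_of_ae_le_mul' (.of_forall fun ω => hg (u ω) (v ω)) p

lemma eLpEDist_isometry_comp {e : E → F} (he : Isometry e) (u v : Ω → E) (p : ℝ≥0∞)
    (θ : Measure Ω) : eLpEDist (e ∘ u) (e ∘ v) p θ = eLpEDist u v p θ := by
  simp only [eLpEDist, Function.comp_apply, he.edist_eq]

lemma eLpEDist_map {φ : Ω' → Ω} {θ : Measure Ω'} (hφ : AEMeasurable φ θ)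
    (hu : AEStronglyMeasurable u (θ.map φ)) (hv : AEStronglyMeasurable v (θ.map φ)) (p : ℝ≥0∞) :
    eLpEDist u v p (θ.map φ) = eLpEDist (u ∘ φ) (v ∘ φ) p θ :=
  eLpNorm_map_measure (aestronglyMeasurable_edist hu hv) hφ

lemma memLp_of_eLpEDist_const_ne_top {G : Type*} [NormedAddCommGroup G] [IsFiniteMeasure θ]
    {u : Ω → G} (hu : AEStronglyMeasurable u θ) {c : G} {p : ℝ≥0∞}
    (h : eLpEDist (fun _ => c) u p θ ≠ ∞) : MemLp u p θ := by
  have hsub : MemLp (u - fun _ => c) p θ :=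
    ⟨hu.sub aestronglyMeasurable_const,
      by rwa [← eLpEDist_eq_eLpNorm_sub, eLpEDist_comm, lt_top_iff_ne_top]⟩
  simpa using hsub.add (memLp_const c)

end LpDistance

section ThickenedIndicator

variable {X E : Type*} [PseudoEMetricSpace X] [NormedAddCommGroup E] [NormedSpace ℝ E]

lemma exists_thickening_sdiff_lt [MeasurableSpace X] [OpensMeasurableSpace X] {μ : Measure X}
    [IsFiniteMeasure μ] {F : Set X} (hF : IsClosed F)
    {η : ℝ≥0∞} (hη : η ≠ 0) :
    ∃ δ > 0, μ (Metric.thickening δ F \ F) < η := by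
  have hlim : Tendsto (fun δ => μ (Metric.thickening δ F)) (𝓝[>] 0) (𝓝 (μ F)) :=
    tendsto_measure_thickening_of_isClosed ⟨1, one_pos, measure_ne_top _ _⟩ hF
  have hlt : μ F < μ F + η := ENNReal.lt_add_right (measure_ne_top _ _) hη
  obtain ⟨δ, hδη, hδ⟩ := ((hlim.eventually_lt_const hlt).and self_mem_nhdsWithin).exists
  exact ⟨δ, hδ, measure_sdiff_lt_of_lt_add hF.nullMeasurableSet
    (Metric.self_subset_thickening hδ F) (measure_ne_top _ _) hδη⟩

lemma lipschitzWith_thickenedIndicator_smul {δ : ℝ} (hδ : 0 < δ) (F : Set X) (c : E) :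
    LipschitzWith (‖c‖₊ * δ.toNNReal⁻¹) fun x => thickenedIndicator hδ F x • c := by
  have hsmul : LipschitzWith ‖c‖₊ fun r : NNReal => r • c := .of_dist_le_mul fun r t => by
    simp only [NNReal.smul_def, dist_eq_norm, ← sub_smul, norm_smul, NNReal.dist_eq,
      Real.norm_eq_abs, coe_nnnorm, mul_comm, le_refl]
  exact hsmul.comp (lipschitzWith_thickenedIndicator hδ F)

lemma enorm_thickenedIndicator_smul_sub_indicator_le {δ : ℝ} (hδ : 0 < δ) {F s : Set X}
    (hFs : F ⊆ s) (c : E) (x : X) :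
    ‖thickenedIndicator hδ F x • c - s.indicator (fun _ => c) x‖ₑ ≤
      ‖((s \ F) ∪ (Metric.thickening δ F \ F)).indicator (fun _ => c) x‖ₑ := by
  by_cases hxF : x ∈ F
  · simp [thickenedIndicator_one hδ F hxF, hFs hxF]
  by_cases hx : x ∈ (s \ F) ∪ (Metric.thickening δ F \ F)
  · rw [Set.indicator_of_mem hx, enorm_le_iff_norm_le]
    have hle : (thickenedIndicator hδ F x : ℝ) ≤ 1 := thickenedIndicator_le_one hδ F x
    by_cases hxs : x ∈ s
    · rw [Set.indicator_of_mem hxs, NNReal.smul_def, ← neg_sub, norm_neg]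
      calc ‖c - (thickenedIndicator hδ F x : ℝ) • c‖
          = (1 - thickenedIndicator hδ F x) * ‖c‖ := by
            rw [← Real.norm_of_nonneg (sub_nonneg.2 hle), ← norm_smul, sub_smul, one_smul]
        _ ≤ ‖c‖ := mul_le_of_le_one_left (norm_nonneg c) (by simp)
    · rw [Set.indicator_of_notMem hxs, sub_zero, NNReal.smul_def, norm_smul]
      exact mul_le_of_le_one_left (norm_nonneg c) (by simpa using hle)
  · have hxs : x ∉ s := fun h => hx (.inl ⟨h, hxF⟩)
    have hxδ : x ∉ Metric.thickening δ F := fun h => hx (.inr ⟨h, hxF⟩)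
    simp [thickenedIndicator_zero hδ F hxδ, hxs]

end ThickenedIndicator

section LipschitzDense

variable {X E : Type*} [PseudoEMetricSpace X] [MeasurableSpace X] [BorelSpace X]
  [NormedAddCommGroup E] [NormedSpace ℝ E] {μ : Measure X} [IsFiniteMeasure μ]

lemma exists_lipschitzWith_eLpNorm_sub_indicator_le {p : ℝ≥0∞} (hp : p ≠ ∞) (c : E) {s : Set X}
    (hs : MeasurableSet s) {ε : ℝ≥0∞} (hε : ε ≠ 0) :
    ∃ g : X → E, eLpNorm (g - s.indicator fun _ => c) p μ ≤ ε ∧ ∃ K, LipschitzWith K g := by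
  obtain ⟨η, hη, hsmall⟩ := exists_eLpNorm_indicator_le (μ := μ) hp c hε
  have hη2 : (η / 2 : ℝ≥0∞) ≠ 0 := by simpa using hη.ne'
  obtain ⟨F, hFs, hF, hsF⟩ := hs.exists_isClosed_sdiff_lt (measure_ne_top μ s) hη2
  obtain ⟨δ, hδ, hδF⟩ := exists_thickening_sdiff_lt (μ := μ) hF hη2
  refine ⟨fun x => thickenedIndicator hδ F x • c, ?_, _,
    lipschitzWith_thickenedIndicator_smul hδ F c⟩
  have hunion : μ ((s \ F) ∪ (Metric.thickening δ F \ F)) ≤ η :=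
    calc μ ((s \ F) ∪ (Metric.thickening δ F \ F))
        ≤ μ (s \ F) + μ (Metric.thickening δ F \ F) := measure_union_le _ _
      _ ≤ η / 2 + η / 2 := by gcongr
      _ = η := ENNReal.add_halves _
  exact (eLpNorm_mono_enorm (enorm_thickenedIndicator_smul_sub_indicator_le hδ hFs c)).trans
    (hsmall _ hunion)

theorem exists_lipschitzWith_eLpNorm_sub_le [SecondCountableTopologyEither X E] {p : ℝ≥0∞}
    (hp : p ≠ ∞) {f : X → E} (hf : MemLp f p μ) {ε : ℝ≥0∞} (hε : ε ≠ 0) :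
    ∃ g : X → E, eLpNorm (f - g) p μ ≤ ε ∧ ∃ K, LipschitzWith K g :=
  hf.induction_dense hp (fun g => ∃ K, LipschitzWith K g)
    (fun c _ hs _ _ hε => exists_lipschitzWith_eLpNorm_sub_indicator_le hp c hs hε)
    (fun _ _ ⟨_, hf⟩ ⟨_, hg⟩ => ⟨_, hf.add hg⟩)
    (fun _ ⟨_, hg⟩ => hg.continuous.aestronglyMeasurable) hε

theorem exists_lipschitzWith_eLpEDist_comp_le [SecondCountableTopologyEither X E] {Ω : Type*}
    [MeasurableSpace Ω] {θ : Measure Ω} [IsFiniteMeasure θ] {a : Ω → X} (ha : AEMeasurable a θ)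
    {φ : X → E} (hφ : AEStronglyMeasurable φ (θ.map a)) {u : Ω → E} (hu : u =ᵐ[θ] φ ∘ a)
    {p : ℝ≥0∞} (hp : p ≠ ∞) (hmem : MemLp u p θ) {η : ℝ≥0∞} (hη : η ≠ 0) :
    ∃ g : X → E, eLpEDist u (g ∘ a) p θ ≤ η ∧ ∃ K, LipschitzWith K g := by
  have hφp : MemLp φ p (θ.map a) := (memLp_map_measure_iff hφ ha).2 ((memLp_congr_ae hu).1 hmem)
  obtain ⟨g, hφg, K, hg⟩ := exists_lipschitzWith_eLpNorm_sub_le hp hφp hη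
  refine ⟨g, ?_, K, hg⟩
  rwa [eLpEDist_congr_left hu, ← eLpEDist_map ha hφ hg.continuous.aestronglyMeasurable,
    eLpEDist_eq_eLpNorm_sub]

end LipschitzDense

section Couplings

variable {Ω E : Type*} [MeasurableSpace Ω] [PseudoEMetricSpace E] {μ ν : Measure Ω}
  {γ : Measure (Ω × Ω)} {h k : Ω → E} {p : ℝ≥0∞}

lemma eLpEDist_comp_fst_of_mem_cpl (hγ : γ ∈ Cpl μ ν) (hh : StronglyMeasurable h)
    (hk : StronglyMeasurable k) (p : ℝ≥0∞) :
    eLpEDist (h ∘ Prod.fst) (k ∘ Prod.fst) p γ = eLpEDist h k p μ := by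
  rw [← hγ.1, eLpEDist_map measurable_fst.aemeasurable hh.aestronglyMeasurable
    hk.aestronglyMeasurable]

lemma eLpEDist_comp_snd_of_mem_cpl (hγ : γ ∈ Cpl μ ν) (hh : StronglyMeasurable h)
    (hk : StronglyMeasurable k) (p : ℝ≥0∞) :
    eLpEDist (h ∘ Prod.snd) (k ∘ Prod.snd) p γ = eLpEDist h k p ν := by
  rw [← hγ.2, eLpEDist_map measurable_snd.aemeasurable hh.aestronglyMeasurable
    hk.aestronglyMeasurable]

lemma eLpEDist_comp_fst_comp_snd_le (hp : 1 ≤ p) (hγ : γ ∈ Cpl μ ν) (hh : StronglyMeasurable h)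
    (hk : StronglyMeasurable k) :
    eLpEDist (h ∘ Prod.fst) (h ∘ Prod.snd) p γ ≤
      eLpEDist h k p μ + eLpEDist (k ∘ Prod.fst) (k ∘ Prod.snd) p γ + eLpEDist h k p ν := by
  rw [← eLpEDist_comp_fst_of_mem_cpl hγ hh hk, ← eLpEDist_comp_snd_of_mem_cpl hγ hh hk,
    eLpEDist_comm (h ∘ Prod.snd)]
  exact eLpEDist_triangle4 hp (hh.comp_measurable measurable_fst).aestronglyMeasurable
    (hk.comp_measurable measurable_fst).aestronglyMeasurable
    (hk.comp_measurable measurable_snd).aestronglyMeasurable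
    (hh.comp_measurable measurable_snd).aestronglyMeasurable

lemma eLpEDist_right_marginal_le (hp : 1 ≤ p) (hγ : γ ∈ Cpl μ ν) (hh : StronglyMeasurable h)
    (hk : StronglyMeasurable k) :
    eLpEDist h k p ν ≤ eLpEDist (h ∘ Prod.fst) (h ∘ Prod.snd) p γ + eLpEDist h k p μ +
      eLpEDist (k ∘ Prod.fst) (k ∘ Prod.snd) p γ := by
  rw [← eLpEDist_comp_fst_of_mem_cpl hγ hh hk, ← eLpEDist_comp_snd_of_mem_cpl hγ hh hk,
    eLpEDist_comm (h ∘ Prod.fst) (h ∘ Prod.snd)]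
  exact eLpEDist_triangle4 hp (hh.comp_measurable measurable_snd).aestronglyMeasurable
    (hh.comp_measurable measurable_fst).aestronglyMeasurable
    (hk.comp_measurable measurable_fst).aestronglyMeasurable
    (hk.comp_measurable measurable_snd).aestronglyMeasurable

end Couplings

lemma prodDist_rpow {A B : Type*} {p : ℝ} (hp : p ≠ 0) (d₁ : A → A → ℝ≥0∞) (d₂ : B → B → ℝ≥0∞)
    (z w : A × B) : prodDist p d₁ d₂ z w ^ p = d₁ z.1 w.1 ^ p + d₂ z.2 w.2 ^ p := by
  rw [prodDist, one_div, ENNReal.rpow_inv_rpow hp]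

section GraphMeasures

variable {X Y E : Type*} [PseudoEMetricSpace X] [PseudoEMetricSpace Y] [PseudoEMetricSpace E]
  [MeasurableSpace X] [MeasurableSpace Y] {p : ℝ} {μ ν : Measure (X × Y)}

lemma eLpEDist_fst_le_prodDist (hp : 0 < p) (π : Measure ((X × Y) × (X × Y))) :
    eLpEDist (fun z => z.1.1) (fun z => z.2.1) (ENNReal.ofReal p) π ≤
      (∫⁻ z, prodDist p edist edist z.1 z.2 ^ p ∂π) ^ (1 / p) := by
  rw [eLpEDist_ofReal hp]
  simp only [prodDist_rpow hp.ne']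
  gcongr
  exact le_self_add

lemma eLpEDist_snd_le_prodDist (hp : 0 < p) (π : Measure ((X × Y) × (X × Y))) :
    eLpEDist (fun z => z.1.2) (fun z => z.2.2) (ENNReal.ofReal p) π ≤
      (∫⁻ z, prodDist p edist edist z.1 z.2 ^ p ∂π) ^ (1 / p) := by
  rw [eLpEDist_ofReal hp]
  simp only [prodDist_rpow hp.ne']
  gcongr
  exact le_add_self

variable [SecondCountableTopology X] [OpensMeasurableSpace X]
  [SecondCountableTopology Y] [OpensMeasurableSpace Y]
  {K : NNReal} {g : X → E} {e : Y → E}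

lemma eLpEDist_le_add_mul_Wp (hp : 1 ≤ p) (he : Isometry e) (hg : LipschitzWith K g) :
    eLpEDist (e ∘ Prod.snd) (g ∘ Prod.fst) (ENNReal.ofReal p) ν ≤
      eLpEDist (e ∘ Prod.snd) (g ∘ Prod.fst) (ENNReal.ofReal p) μ +
        (1 + K) * Wp p (prodDist p edist edist) μ ν := by
  have hp0 : 0 < p := one_pos.trans_le hp
  simp only [Wp, ENNReal.mul_iInf_of_ne (a := 1 + K) (by simp) (by simp), ENNReal.add_iInf]
  refine le_iInf₂ fun π hπ => ?_
  set W := (∫⁻ z, prodDist p edist edist z.1 z.2 ^ p ∂π) ^ (1 / p)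
  refine (eLpEDist_right_marginal_le (by simpa using hp) hπ
    (he.continuous.comp continuous_snd).stronglyMeasurable
    (hg.continuous.comp continuous_fst).stronglyMeasurable).trans ?_
  have hY : eLpEDist ((e ∘ Prod.snd) ∘ Prod.fst) ((e ∘ Prod.snd) ∘ Prod.snd) (ENNReal.ofReal p) π
      ≤ W := (eLpEDist_isometry_comp he _ _ _ _).trans_le (eLpEDist_snd_le_prodDist hp0 π)
  have hX : eLpEDist ((g ∘ Prod.fst) ∘ Prod.fst) ((g ∘ Prod.fst) ∘ Prod.snd) (ENNReal.ofReal p) π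
      ≤ K * W := (eLpEDist_lipschitzWith_comp_le hg _ _ _ _).trans
    (by gcongr; exact eLpEDist_fst_le_prodDist hp0 π)
  refine (add_le_add (add_le_add_left hY _) hX).trans_eq (by ring)

theorem eLpEDist_snd_le_of_lipschitzWith (hp : 1 ≤ p) (he : Isometry e) (hg : LipschitzWith K g)
    {γ : Measure ((X × Y) × (X × Y))} (hγ : γ ∈ Cpl μ ν) :
    eLpEDist (fun z => z.1.2) (fun z => z.2.2) (ENNReal.ofReal p) γ ≤
      2 * eLpEDist (e ∘ Prod.snd) (g ∘ Prod.fst) (ENNReal.ofReal p) μ +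
        K * eLpEDist (fun z => z.1.1) (fun z => z.2.1) (ENNReal.ofReal p) γ +
        (1 + K) * Wp p (prodDist p edist edist) μ ν := by
  set D := eLpEDist (e ∘ Prod.snd) (g ∘ Prod.fst) (ENNReal.ofReal p) μ
  rw [← eLpEDist_isometry_comp he]
  refine (eLpEDist_comp_fst_comp_snd_le (by simpa using hp) hγ
    (he.continuous.comp continuous_snd).stronglyMeasurable
    (hg.continuous.comp continuous_fst).stronglyMeasurable).trans ?_
  refine (add_le_add (add_le_add_right (eLpEDist_lipschitzWith_comp_le hg _ _ _ _) D)
    (eLpEDist_le_add_mul_Wp (μ := μ) hp he hg)).trans_eq ?_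
  simp only [D, Function.comp_def]
  ring

end GraphMeasures

theorem exists_lipschitzWith_eLpEDist_snd_comp_fst_le {X Y E : Type*}
    [PseudoEMetricSpace X] [MeasurableSpace X] [BorelSpace X]
    [PseudoEMetricSpace Y] [SecondCountableTopology Y] [MeasurableSpace Y] [OpensMeasurableSpace Y]
    [NormedAddCommGroup E] [NormedSpace ℝ E] [SecondCountableTopologyEither X E] {e : Y → E}
    (he : Isometry e) {μ : Measure (X × Y)} [IsFiniteMeasure μ] {f : X → Y}
    (hf : AEMeasurable f (μ.map Prod.fst)) (hgraph : ∀ᵐ z ∂μ, z.2 = f z.1) {p : ℝ≥0∞} (hp : p ≠ ∞)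
    {y₀ : Y} (hmoment : eLpEDist (fun _ => y₀) Prod.snd p μ ≠ ∞) {η : ℝ≥0∞} (hη : η ≠ 0) :
    ∃ g : X → E, eLpEDist (e ∘ Prod.snd) (g ∘ Prod.fst) p μ ≤ η ∧ ∃ K, LipschitzWith K g := by
  have hmem : MemLp (e ∘ Prod.snd) p μ := memLp_of_eLpEDist_const_ne_top (c := e y₀)
    (he.continuous.comp_aestronglyMeasurable measurable_snd.aestronglyMeasurable)
    ((eLpEDist_isometry_comp he (fun _ => y₀) Prod.snd p μ).trans_ne hmoment)
  exact exists_lipschitzWith_eLpEDist_comp_le measurable_fst.aemeasurable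
    (he.continuous.comp_aestronglyMeasurable hf.aestronglyMeasurable)
    (hgraph.mono fun z hz => congrArg e hz) hp hmem hη

lemma MemPp.exists_lintegral_edist_snd_rpow_ne_top {X Y : Type*} [MeasurableSpace X]
    [MeasurableSpace Y] [PseudoEMetricSpace X] [PseudoEMetricSpace Y] {p : ℝ} (hp : p ≠ 0)
    {μ : Measure (X × Y)} (hμ : MemPp p (prodDist p edist edist) μ) :
    ∃ y₀ : Y, ∫⁻ z, edist y₀ z.2 ^ p ∂μ ≠ ∞ := by
  obtain ⟨_, ⟨x₀, y₀⟩, hmoment⟩ := hμ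
  refine ⟨y₀, ne_top_of_le_ne_top hmoment <| lintegral_mono fun z => ?_⟩
  rw [prodDist_rpow hp]
  exact le_add_self

lemma ae_snd_eq_of_measure_graph_eq_one {X Y : Type*} [MeasurableSpace X] [MeasurableSpace Y]
    [MeasurableEq Y] {μ : Measure (X × Y)} [IsProbabilityMeasure μ] {f : X → Y} (hf : Measurable f)
    (hgraph : μ {z | z.2 = f z.1} = 1) : ∀ᵐ z ∂μ, z.2 = f z.1 :=
  (prob_compl_eq_zero_iff
    (measurableSet_eq_fun measurable_snd (hf.comp measurable_fst))).2 hgraph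

theorem graph_measure_stability_general {X Y : Type*}
    [PseudoEMetricSpace X] [SecondCountableTopology X] [MeasurableSpace X] [BorelSpace X]
    [MetricSpace Y] [SecondCountableTopology Y] [MeasurableSpace Y] [OpensMeasurableSpace Y]
    {p : ℝ} (hp : 1 ≤ p) {μ : Measure (X × Y)} [IsFiniteMeasure μ]
    {y₀ : Y} (hmoment : ∫⁻ z, edist y₀ z.2 ^ p ∂μ ≠ ∞)
    {f : X → Y} (hf : AEMeasurable f (μ.map Prod.fst)) (hgraph : ∀ᵐ z ∂μ, z.2 = f z.1)
    {ε : ℝ≥0∞} (hε : 0 < ε) :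
    ∃ δ : ℝ≥0∞, 0 < δ ∧ ∀ ν : Measure (X × Y), Wp p (prodDist p edist edist) μ ν < δ →
      ∀ γ ∈ Cpl μ ν, ∫⁻ z, edist z.1.1 z.2.1 ^ p ∂γ < δ ^ p →
        ∫⁻ z, edist z.1.2 z.2.2 ^ p ∂γ < ε ^ p := by
  have hp0 : 0 < p := one_pos.trans_le hp
  obtain ⟨ε', hε'0, hε'⟩ := exists_between hε
  have hmoment' : eLpEDist (fun _ => y₀) Prod.snd (ENNReal.ofReal p) μ ≠ ∞ := by
    rw [eLpEDist_ofReal hp0]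
    exact ENNReal.rpow_ne_top_of_nonneg (by positivity) hmoment
  have he : Isometry (kuratowskiEmbedding Y) := kuratowskiEmbedding.isometry Y
  obtain ⟨g, hμg, K, hg⟩ := exists_lipschitzWith_eLpEDist_snd_comp_fst_le he hf hgraph
    ENNReal.ofReal_ne_top hmoment' (η := ε' / 2 / 2) (by simpa using hε'0.ne')
  obtain ⟨δ, hδ0, hδ⟩ : ∃ δ : ℝ≥0∞, 0 < δ ∧ (1 + 2 * K) * δ = ε' / 2 :=
    ⟨ε' / 2 / (1 + 2 * K), ENNReal.div_pos (by simpa using hε'0.ne') (by finiteness),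
      ENNReal.mul_div_cancel (by simp) (by finiteness)⟩
  refine ⟨δ, hδ0, fun ν hν γ hγ hX => ?_⟩
  rw [← eLpEDist_ofReal_lt_iff hp0] at hX ⊢
  refine lt_of_le_of_lt ?_ hε'
  calc eLpEDist (fun z => z.1.2) (fun z => z.2.2) (ENNReal.ofReal p) γ
      ≤ 2 * (ε' / 2 / 2) + K * δ + (1 + K) * δ := by
        grw [eLpEDist_snd_le_of_lipschitzWith hp he hg hγ, hμg, hX, hν]
    _ = 2 * (ε' / 2 / 2) + (1 + 2 * K) * δ := by ring
    _ = ε' / 2 + ε' / 2 := by rw [hδ, ENNReal.mul_div_cancel two_ne_zero ofNat_ne_top]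
    _ = ε' := ENNReal.add_halves ε'

/-- **Lemma 4.2 of the companion paper.**  Let `μ ∈ FP(X, Y)`.  For every
`ε > 0` there is `δ > 0` such that for every `ν` with `𝒲_p(μ, ν) < δ` and every
coupling `γ` of `μ` and `ν` whose `X`-displacement cost is `< δ^p`, the
`Y`-displacement cost is `< ε^p`. -/
theorem graph_measure_stability
    {X Y : Type} [MetricSpace X] [CompleteSpace X] [SecondCountableTopology X]
    [MeasurableSpace X] [BorelSpace X] [Nonempty X]
    [MetricSpace Y] [CompleteSpace Y] [SecondCountableTopology Y]
    [MeasurableSpace Y] [BorelSpace Y] [Nonempty Y]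
    (p : ℝ) (hp : 1 ≤ p)
    (μ : Measure (X × Y))
    (hμ : MemPp p (prodDist p (edist : X → X → ℝ≥0∞) (edist : Y → Y → ℝ≥0∞)) μ)
    (f : X → Y) (hf : Measurable f) (hgraph : μ {z | z.2 = f z.1} = 1)
    (ε : ℝ≥0∞) (hε : 0 < ε) :
    ∃ δ : ℝ≥0∞, 0 < δ ∧
      ∀ ν : Measure (X × Y),
        MemPp p (prodDist p (edist : X → X → ℝ≥0∞) (edist : Y → Y → ℝ≥0∞)) ν →
        Wp p (prodDist p (edist : X → X → ℝ≥0∞) (edist : Y → Y → ℝ≥0∞)) μ ν < δ →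
        ∀ γ : Measure ((X × Y) × (X × Y)), γ ∈ Cpl μ ν →
          (∫⁻ z, edist z.1.1 z.2.1 ^ p ∂γ) < δ ^ p →
          (∫⁻ z, edist z.1.2 z.2.2 ^ p ∂γ) < ε ^ p := by
  have := hμ.1
  obtain ⟨y₀, hmoment⟩ := hμ.exists_lintegral_edist_snd_rpow_ne_top (by positivity)
  obtain ⟨δ, hδ, hstable⟩ := graph_measure_stability_general hp hmoment hf.aemeasurable
    (ae_snd_eq_of_measure_graph_eq_one hf hgraph) hε
  exact ⟨δ, hδ, fun ν _ => hstable ν⟩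

end AWPaper
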